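/- Let n ≥ 6 be an integer and let G be a connected simple graph on n vertices such that the multiplicity of the largest distance Laplacian eigenvalue of G equals n−3. Then the diameter of G equals 2. -/

import Mathlib

open Matrix

/-- The distance Laplacian matrix of a graph: diagonal entries are the transmissions
`Tr(v) = ∑ u, d(v,u)`, off-diagonal entries are `-d(u,v)`. -/
noncomputable def distLaplacian {V : Type*} [Fintype V] [DecidableEq V]
    (G : SimpleGraph V) : Matrix V V ℝ :=
  Matrix.of fun i j => if i = j then ∑ k : V, (G.dist i k : ℝ) else -(G.dist i j : ℝ)

/-- The multiplicity of `μ` as an eigenvalue of `M`, i.e. the dimension of the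
corresponding eigenspace. -/
noncomputable def eigMult {V : Type*} [Fintype V] (M : Matrix V V ℝ) (μ : ℝ) : ℕ :=
  Module.finrank ℝ (Module.End.eigenspace M.mulVecLin μ)

/-- The largest eigenvalue of a matrix. -/
noncomputable def lambdaMax {V : Type*} [Fintype V] (M : Matrix V V ℝ) : ℝ :=
  sSup {μ : ℝ | Module.End.HasEigenvalue M.mulVecLin μ}

/-- The transmission of a vertex. -/
noncomputable def transmission {V : Type*} [Fintype V] (G : SimpleGraph V) (v : V) : ℕ :=
  ∑ u : V, G.dist v u

/-!
Let `l` be the largest eigenvalue of the distance Laplacian `M` of a graph on `n` vertices, and let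
`c = l / n`. The matrix `l (I - J / n) - M` is positive semidefinite, and its rank is `n - 1` minus
the multiplicity of `l`. If that multiplicity is `n - 3`, it is therefore the Gram matrix of vectors
`x i` in a plane, with `⟪x i, x j⟫ = d(i,j) - c` for `i ≠ j`.

Close vertices thus correspond to obtuse angles, and a plane has no room for four vectors at
pairwise obtuse angles. This excludes complete graphs. Suppose there is a shortest path
`v₀ v₁ v₂ v₃`. As `3 < 2 c`, some pairs among its four vectors are bases of the plane, so that the
vector of a further vertex is determined by two of its distances to the path. A neighbour of the
path would then repeat the vector of a path vertex at an impossible distance, or violate a sign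
condition on the inner products. Hence the path exhausts the graph, which has more than four
vertices.
-/

open Module InnerProductSpace
open Module.End (HasEigenvalue eigenspace mem_eigenspace_iff)
open scoped MatrixOrder RealInnerProductSpace

section Deflation

variable {ι : Type*} [Fintype ι] {M : Matrix ι ι ℝ} {μ : ℝ}

theorem le_lambdaMax_of_hasEigenvalue (h : HasEigenvalue M.mulVecLin μ) : μ ≤ lambdaMax M :=
  le_csSup (End.finite_hasEigenvalue _).bddAbove h

theorem sum_eq_zero_of_mem_eigenspace (hM : M.IsHermitian) (hM1 : M *ᵥ 1 = 0) (hμ : μ ≠ 0)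
    {v : ι → ℝ} (hv : v ∈ eigenspace M.mulVecLin μ) : ∑ i, v i = 0 := by
  have hzero : μ • (1 ⬝ᵥ v) = 0 := by
    rw [← dotProduct_smul, ← mem_eigenspace_iff.1 hv, mulVecLin_apply, dotProduct_mulVec,
      ← mulVec_transpose, ← conjTranspose_eq_transpose_of_trivial, hM.eq, hM1, zero_dotProduct]
  simpa [hμ, one_dotProduct] using hzero

variable [DecidableEq ι]

theorem posSemidef_lambdaMax_smul_one_sub (hM : M.IsHermitian) :
    (lambdaMax M • (1 : Matrix ι ι ℝ) - M).PosSemidef := by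
  refine posSemidef_iff_isHermitian_and_spectrum_nonneg.2
    ⟨(isHermitian_one.smul (star_trivial _)).sub hM, ?_⟩
  rw [← Algebra.algebraMap_eq_smul_one, ← spectrum.singleton_sub_eq, ← spectrum_toLin']
  rintro _ ⟨_, rfl, μ, hμ, rfl⟩
  exact sub_nonneg.2 (le_lambdaMax_of_hasEigenvalue (End.hasEigenvalue_iff_mem_spectrum.2 hμ))

variable (ι) in
/-- The matrix of the orthogonal projection of `ℝ^ι` onto the vectors with zero sum. -/
noncomputable def centeringMatrix : Matrix ι ι ℝ :=
  1 - (Fintype.card ι : ℝ)⁻¹ • vecMulVec 1 1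

theorem centeringMatrix_apply (i j : ι) :
    centeringMatrix ι i j = (1 : Matrix ι ι ℝ) i j - (Fintype.card ι : ℝ)⁻¹ := by
  simp [centeringMatrix]

theorem isHermitian_centeringMatrix : (centeringMatrix ι).IsHermitian := by
  ext i j
  simp [centeringMatrix_apply, one_apply, eq_comm]

theorem centeringMatrix_mulVec (v : ι → ℝ) :
    centeringMatrix ι *ᵥ v = v - ((Fintype.card ι : ℝ)⁻¹ * ∑ i, v i) • 1 := by
  rw [centeringMatrix, sub_mulVec, one_mulVec, smul_mulVec, vecMulVec_mulVec, one_dotProduct,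
    op_smul_eq_smul, smul_smul]

theorem mul_centeringMatrix (hM1 : M *ᵥ 1 = 0) : M * centeringMatrix ι = M := by
  rw [centeringMatrix, mul_sub, mul_one, mul_smul_comm, mul_vecMulVec, hM1, zero_vecMulVec,
    smul_zero, sub_zero]

theorem centeringMatrix_mul (hM : M.IsHermitian) (hM1 : M *ᵥ 1 = 0) :
    centeringMatrix ι * M = M := by
  simpa only [conjTranspose_mul, hM.eq, isHermitian_centeringMatrix.eq] using
    congrArg conjTranspose (mul_centeringMatrix hM1)

/-- The shift `μ I - M`, deflated along the constant vector: for a symmetric `M` killing the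
constant vector it has the kernel of `μ I - M` enlarged by that vector. -/
noncomputable def deflatedShift (M : Matrix ι ι ℝ) (μ : ℝ) : Matrix ι ι ℝ :=
  μ • centeringMatrix ι - M

theorem deflatedShift_mulVec (v : ι → ℝ) :
    deflatedShift M μ *ᵥ v = μ • (centeringMatrix ι *ᵥ v) - M *ᵥ v := by
  rw [deflatedShift, sub_mulVec, smul_mulVec]

variable [Nonempty ι]

theorem centeringMatrix_mulVec_one : centeringMatrix ι *ᵥ 1 = 0 := by
  simp [centeringMatrix_mulVec]

theorem deflatedShift_eq_conj (hM : M.IsHermitian) (hM1 : M *ᵥ 1 = 0) :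
    deflatedShift M μ = (centeringMatrix ι)ᴴ * (μ • 1 - M) * centeringMatrix ι := by
  rw [isHermitian_centeringMatrix.eq, mul_sub, sub_mul, centeringMatrix_mul hM hM1,
    mul_centeringMatrix hM1, mul_smul_comm, mul_one, smul_mul_assoc,
    mul_centeringMatrix centeringMatrix_mulVec_one, deflatedShift]

theorem posSemidef_deflatedShift_lambdaMax (hM : M.IsHermitian) (hM1 : M *ᵥ 1 = 0) :
    (deflatedShift M (lambdaMax M)).PosSemidef := by
  rw [deflatedShift_eq_conj hM hM1]
  exact (posSemidef_lambdaMax_smul_one_sub hM).conjTranspose_mul_mul_same _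

theorem ker_mulVecLin_deflatedShift (hM : M.IsHermitian) (hM1 : M *ᵥ 1 = 0) (hμ : μ ≠ 0) :
    (deflatedShift M μ).mulVecLin.ker =
      eigenspace M.mulVecLin μ ⊔ Submodule.span ℝ {(1 : ι → ℝ)} := by
  refine le_antisymm (fun v hv => ?_) (sup_le (fun v hv => ?_) ?_)
  · have hPv : centeringMatrix ι *ᵥ v ∈ eigenspace M.mulVecLin μ := by
      rw [mem_eigenspace_iff, mulVecLin_apply, mulVec_mulVec, mul_centeringMatrix hM1]
      simpa [deflatedShift_mulVec, sub_eq_zero, eq_comm] using hv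
    rw [← sub_add_cancel v (((Fintype.card ι : ℝ)⁻¹ * ∑ i, v i) • 1), ← centeringMatrix_mulVec]
    exact Submodule.add_mem_sup hPv (Submodule.smul_mem _ _ (Submodule.mem_span_singleton_self _))
  · have hMv : M *ᵥ v = μ • v := mem_eigenspace_iff.1 hv
    simp [deflatedShift_mulVec, centeringMatrix_mulVec, hMv,
      sum_eq_zero_of_mem_eigenspace hM hM1 hμ hv]
  · simp [Submodule.span_singleton_le_iff_mem, deflatedShift_mulVec,
      centeringMatrix_mulVec_one, hM1]

theorem rank_deflatedShift_add (hM : M.IsHermitian) (hM1 : M *ᵥ 1 = 0) (hμ : μ ≠ 0) :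
    (deflatedShift M μ).rank + (eigMult M μ + 1) = Fintype.card ι := by
  have hinf : eigenspace M.mulVecLin μ ⊓ Submodule.span ℝ {(1 : ι → ℝ)} = ⊥ := by
    rw [← disjoint_iff, Submodule.disjoint_span_singleton' one_ne_zero]
    intro h
    simpa using sum_eq_zero_of_mem_eigenspace hM hM1 hμ h
  have hker := Submodule.finrank_sup_add_finrank_inf_eq
    (eigenspace M.mulVecLin μ) (Submodule.span ℝ {(1 : ι → ℝ)})
  rw [hinf, finrank_bot, add_zero, finrank_span_singleton one_ne_zero,
    ← ker_mulVecLin_deflatedShift hM hM1 hμ] at hker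
  rw [eigMult, ← hker, Matrix.rank, LinearMap.finrank_range_add_finrank_ker,
    finrank_fintype_fun_eq_card]

end Deflation

theorem exists_gram_eq_of_posSemidef {ι : Type*} [Fintype ι] {N : Matrix ι ι ℝ}
    (hN : N.PosSemidef) : ∃ x : ι → EuclideanSpace ℝ (Fin N.rank), gram ℝ x = N := by
  classical
  obtain ⟨B, hB⟩ := CStarAlgebra.nonneg_iff_eq_star_mul_self.1 hN.nonneg
  let y : ι → EuclideanSpace ℝ ι := fun j => WithLp.toLp 2 (B.col j)
  let W := Submodule.span ℝ (Set.range y)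
  have hW : finrank ℝ W = N.rank := by
    have hmap : W = (Submodule.span ℝ (Set.range B.col)).map
        (WithLp.linearEquiv 2 ℝ (ι → ℝ)).symm.toLinearMap := by
      rw [Submodule.map_span, ← Set.range_comp]
      rfl
    rw [hmap, LinearEquiv.finrank_map_eq, ← rank_eq_finrank_span_cols, hB, star_eq_conjTranspose,
      rank_conjTranspose_mul_self]
  let e := (stdOrthonormalBasis ℝ W).repr.trans
    (LinearIsometryEquiv.piLpCongrLeft 2 ℝ ℝ (finCongr hW))
  refine ⟨fun j => e ⟨y j, Submodule.subset_span ⟨j, rfl⟩⟩, ?_⟩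
  ext i j
  rw [gram_apply, LinearIsometryEquiv.inner_map_map, Submodule.coe_inner]
  simp [y, hB, PiLp.inner_apply, mul_apply, mul_comm]

section Plane

variable {E : Type*} [NormedAddCommGroup E] [InnerProductSpace ℝ E]

theorem linearIndependent_pair_of_inner_mul_inner_ne {a b y z : E}
    (h : ⟪a, y⟫_ℝ * ⟪b, z⟫_ℝ ≠ ⟪a, z⟫_ℝ * ⟪b, y⟫_ℝ) : LinearIndependent ℝ ![a, b] := by
  refine LinearIndependent.pair_iff.2 fun s t hst => ?_
  have hinner (v : E) : s * ⟪a, v⟫_ℝ + t * ⟪b, v⟫_ℝ = 0 := by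
    rw [← real_inner_smul_left, ← real_inner_smul_left, ← inner_add_left, hst, inner_zero_left]
  have hdet := sub_ne_zero.2 h
  constructor
  · exact (mul_eq_zero_iff_right hdet).1
      (by linear_combination ⟪b, z⟫_ℝ * hinner y - ⟪b, y⟫_ℝ * hinner z)
  · exact (mul_eq_zero_iff_right hdet).1
      (by linear_combination ⟪a, y⟫_ℝ * hinner z - ⟪a, z⟫_ℝ * hinner y)

variable [Fact (finrank ℝ E = 2)]

theorem eq_of_inner_eq_of_linearIndependent {a b y z : E} (h : LinearIndependent ℝ ![a, b])
    (ha : ⟪y, a⟫_ℝ = ⟪z, a⟫_ℝ) (hb : ⟪y, b⟫_ℝ = ⟪z, b⟫_ℝ) : y = z := by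
  refine ext_inner_right_basis
    (basisOfLinearIndependentOfCardEqFinrank h (by simp [Fact.out (p := finrank ℝ E = 2)])) ?_
  simp [Fin.forall_fin_two, ha, hb]

theorem exists_inner_mul_inner_add_mul_eq (u : E) :
    ∃ f : E → ℝ, ∀ x y, ⟪u, x⟫_ℝ * ⟪u, y⟫_ℝ + f x * f y = ‖u‖ ^ 2 * ⟪x, y⟫_ℝ := by
  have : FiniteDimensional ℝ E := .of_fact_finrank_eq_two
  let o : Orientation ℝ E (Fin 2) :=
    ((stdOrthonormalBasis ℝ E).reindex (finCongr Fact.out)).toBasis.orientation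
  exact ⟨o.areaForm u, o.inner_mul_inner_add_areaForm_mul_areaForm u⟩

/-- Otherwise the components of `v`, `t`, `w` orthogonal to `u` would have pairwise opposite
signs. -/
theorem inner_nonneg_of_five_inner_neg {u v t w : E} (huv : ⟪u, v⟫_ℝ < 0) (hut : ⟪u, t⟫_ℝ < 0)
    (huw : ⟪u, w⟫_ℝ < 0) (hvt : ⟪v, t⟫_ℝ < 0) (hvw : ⟪v, w⟫_ℝ < 0) : 0 ≤ ⟪t, w⟫_ℝ := by
  obtain ⟨f, hf⟩ := exists_inner_mul_inner_add_mul_eq u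
  have hneg {x y : E} (hx : ⟪u, x⟫_ℝ < 0) (hy : ⟪u, y⟫_ℝ < 0) (hxy : ⟪x, y⟫_ℝ < 0) :
      f x * f y < 0 := by
    nlinarith [hf x y, mul_pos_of_neg_of_neg hx hy, sq_nonneg ‖u‖]
  by_contra! htw
  have hpos : 0 < f v * f t * (f v * f w) :=
    mul_pos_of_neg_of_neg (hneg huv hut hvt) (hneg huv huw hvw)
  have hnonpos : f v ^ 2 * (f t * f w) ≤ 0 :=
    mul_nonpos_of_nonneg_of_nonpos (sq_nonneg _) (hneg hut huw htw).le
  linarith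

/-- The components of `z` and `w` orthogonal to `u` have the same sign, those of `b` and `w`
opposite signs. -/
theorem inner_neg_of_crossing {z b u w : E} (huz : ⟪u, z⟫_ℝ < 0) (hzw : 0 ≤ ⟪z, w⟫_ℝ)
    (hbw : ⟪b, w⟫_ℝ < 0) (hub : 0 ≤ ⟪u, b⟫_ℝ) (huw : 0 < ⟪u, w⟫_ℝ) : ⟪z, b⟫_ℝ < 0 := by
  obtain ⟨f, hf⟩ := exists_inner_mul_inner_add_mul_eq u
  have hu : 0 < ‖u‖ ^ 2 := by
    rw [← real_inner_self_eq_norm_sq, real_inner_self_pos]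
    rintro rfl
    simp at huz
  have hfzw : 0 < f z * f w := by
    linarith [hf z w, mul_nonneg hu.le hzw, mul_neg_of_neg_of_pos huz huw]
  have hfbw : f b * f w < 0 := by
    linarith [hf b w, mul_neg_of_pos_of_neg hu hbw, mul_nonneg hub huw.le]
  have hfzb : f z * f b < 0 := by
    have : f z * f b * f w ^ 2 < 0 := by linarith [mul_neg_of_pos_of_neg hfzw hfbw]
    exact neg_of_mul_neg_left this (sq_nonneg _)
  refine neg_of_mul_neg_right ?_ hu.le
  rw [← hf z b]
  exact add_neg_of_nonpos_of_neg (mul_nonpos_of_nonpos_of_nonneg huz.le hub) hfzb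

end Plane

section Graph

variable {V : Type*} {G : SimpleGraph V}

theorem transmission_top [Fintype V] (v : V) :
    transmission (⊤ : SimpleGraph V) v = Fintype.card V - 1 := by
  classical
  simp [transmission, SimpleGraph.dist_top, Finset.sum_ite, Finset.filter_ne]

theorem card_mul_dist_le_transmission_add [Fintype V] (hG : G.Connected) (u w : V) :
    Fintype.card V * G.dist u w ≤ transmission G u + transmission G w := by
  rw [transmission, transmission, ← Finset.sum_add_distrib, ← smul_eq_mul]
  refine Finset.card_nsmul_le_sum _ _ _ fun v _ => ?_
  rw [G.dist_comm (u := w)]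
  exact hG.dist_triangle

theorem exists_adj_mem_notMem (hG : G.Connected) {S : Set V} (hS : S.Nonempty)
    (hS' : S ≠ Set.univ) : ∃ a ∈ S, ∃ w ∉ S, G.Adj a w := by
  obtain ⟨u, hu⟩ := hS
  obtain ⟨v, hv⟩ := (Set.ne_univ_iff_exists_notMem S).1 hS'
  obtain ⟨p⟩ := hG.preconnected u v
  obtain ⟨d, -, hd₁, hd₂⟩ := p.exists_boundary_dart S hu hv
  exact ⟨_, hd₁, _, hd₂, d.adj⟩

theorem exists_dist_eq_and_dist_add_eq (hG : G.Connected) {u w : V} {k : ℕ}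
    (hk : k ≤ G.dist u w) : ∃ v, G.dist u v = k ∧ G.dist v w + k = G.dist u w := by
  obtain ⟨p, hp⟩ := hG.exists_walk_length_eq_dist u w
  have htake : G.dist u (p.getVert k) ≤ k := by
    simpa [hp, hk] using SimpleGraph.dist_le (p.take k)
  have hdrop : G.dist (p.getVert k) w ≤ G.dist u w - k := by
    simpa [hp] using SimpleGraph.dist_le (p.drop k)
  have htri := hG.dist_triangle (u := u) (v := p.getVert k) (w := w)
  exact ⟨p.getVert k, by lia, by lia⟩

/-- `v₀, v₁, v₂, v₃` are the consecutive vertices of a shortest path of length three; the encoding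
records all their mutual distances. -/
structure IsGeodesicQuad (G : SimpleGraph V) (v₀ v₁ v₂ v₃ : V) : Prop where
  dist₀₁ : G.dist v₀ v₁ = 1
  dist₁₂ : G.dist v₁ v₂ = 1
  dist₂₃ : G.dist v₂ v₃ = 1
  dist₀₂ : G.dist v₀ v₂ = 2
  dist₁₃ : G.dist v₁ v₃ = 2
  dist₀₃ : G.dist v₀ v₃ = 3

theorem IsGeodesicQuad.symm {v₀ v₁ v₂ v₃ : V} (h : IsGeodesicQuad G v₀ v₁ v₂ v₃) :
    IsGeodesicQuad G v₃ v₂ v₁ v₀ := by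
  constructor <;> rw [SimpleGraph.dist_comm]
  exacts [h.dist₂₃, h.dist₁₂, h.dist₀₁, h.dist₁₃, h.dist₀₂, h.dist₀₃]

theorem exists_isGeodesicQuad (hG : G.Connected) {u w : V} (h : 3 ≤ G.dist u w) :
    ∃ v₁ v₂ v₃, IsGeodesicQuad G u v₁ v₂ v₃ := by
  obtain ⟨v₃, h₀₃, -⟩ := exists_dist_eq_and_dist_add_eq hG h
  obtain ⟨v₁, h₀₁, h₁₃⟩ := exists_dist_eq_and_dist_add_eq hG (h₀₃ ▸ Nat.one_le_ofNat)
  obtain ⟨v₂, h₁₂, h₂₃⟩ := exists_dist_eq_and_dist_add_eq (u := v₁) (w := v₃) (k := 1) hG (by lia)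
  have h₀₂ := hG.dist_triangle (u := u) (v := v₁) (w := v₂)
  have h₀₂' := hG.dist_triangle (u := u) (v := v₂) (w := v₃)
  exact ⟨v₁, v₂, v₃, by constructor <;> lia⟩

end Graph

section Realization

variable {V E : Type*} [Fintype V] [NormedAddCommGroup E] [InnerProductSpace ℝ E]
  {G : SimpleGraph V} {c : ℝ} {x : V → E}

/-- The vectors `x` have as Gram matrix the one with off-diagonal entries `d(i,j) - c` and zero row
sums; `norm_sq_eq` is the diagonal which the row sums force. -/
structure IsDistRealization (G : SimpleGraph V) (c : ℝ) (x : V → E) : Prop where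
  inner_eq : ∀ {i j}, i ≠ j → ⟪x i, x j⟫_ℝ = G.dist i j - c
  norm_sq_eq : ∀ i, ‖x i‖ ^ 2 = (Fintype.card V - 1) * c - transmission G i

namespace IsDistRealization

theorem inner_eq_of_dist_eq (hx : IsDistRealization G c x) {i j : V} {k : ℕ} [k.AtLeastTwo]
    (h : G.dist i j = OfNat.ofNat k) : ⟪x i, x j⟫_ℝ = OfNat.ofNat k - c := by
  rw [hx.inner_eq (by rintro rfl; simp at h), h, Nat.cast_ofNat]

theorem inner_eq_of_dist_eq_one (hx : IsDistRealization G c x) {i j : V}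
    (h : G.dist i j = 1) : ⟪x i, x j⟫_ℝ = 1 - c := by
  rw [hx.inner_eq (by rintro rfl; simp at h), h, Nat.cast_one]

theorem transmission_le (hx : IsDistRealization G c x) (i : V) :
    transmission G i ≤ (Fintype.card V - 1) * c := by
  linarith [hx.norm_sq_eq i, sq_nonneg ‖x i‖]

theorem dist_lt_two_mul (hx : IsDistRealization G c x) (hG : G.Connected) {u w : V}
    (huw : u ≠ w) : G.dist u w < 2 * c := by
  have hcard : (1 : ℝ) < Fintype.card V := by
    exact_mod_cast Fintype.one_lt_card_iff.2 ⟨u, w, huw⟩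
  have hdist : (0 : ℝ) < G.dist u w := by exact_mod_cast hG.pos_dist_of_ne huw
  have hle : (Fintype.card V * G.dist u w : ℝ) ≤ (Fintype.card V - 1) * (2 * c) := by
    have := card_mul_dist_le_transmission_add hG u w
    have : (Fintype.card V * G.dist u w : ℝ) ≤ transmission G u + transmission G w := by
      exact_mod_cast this
    linarith [hx.transmission_le u, hx.transmission_le w]
  nlinarith

theorem ne_of_dist_eq_one (hx : IsDistRealization G c x) (hc : 1 < c) {i j : V}
    (h : G.dist i j = 1) : x i ≠ x j := by
  intro hij
  have := hx.inner_eq_of_dist_eq_one h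
  rw [hij, real_inner_self_eq_norm_sq] at this
  linarith [sq_nonneg ‖x j‖]

variable {v₀ v₁ v₂ v₃ z : V}

theorem linearIndependent_middle (hx : IsDistRealization G c x)
    (hv : IsGeodesicQuad G v₀ v₁ v₂ v₃) (hc : 3 / 2 < c) :
    LinearIndependent ℝ ![x v₁, x v₂] := by
  refine linearIndependent_pair_of_inner_mul_inner_ne (y := x v₀) (z := x v₃) ?_
  rw [real_inner_comm, real_inner_comm (x v₀), hx.inner_eq_of_dist_eq_one hv.dist₀₁,
    hx.inner_eq_of_dist_eq_one hv.dist₂₃, hx.inner_eq_of_dist_eq hv.dist₁₃,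
    hx.inner_eq_of_dist_eq hv.dist₀₂]
  intro h
  linarith

theorem linearIndependent_end (hx : IsDistRealization G c x)
    (hv : IsGeodesicQuad G v₀ v₁ v₂ v₃) (hc : 3 / 2 < c) (hc₂ : c ≤ 2) :
    LinearIndependent ℝ ![x v₀, x v₁] := by
  refine linearIndependent_pair_of_inner_mul_inner_ne (y := x v₁) (z := x v₃) ?_
  rw [hx.inner_eq_of_dist_eq_one hv.dist₀₁, hx.inner_eq_of_dist_eq hv.dist₁₃,
    hx.inner_eq_of_dist_eq hv.dist₀₃]
  have hpos : 0 < ⟪x v₁, x v₁⟫_ℝ := by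
    refine real_inner_self_pos.2 fun h => ?_
    have := hx.inner_eq_of_dist_eq_one hv.dist₀₁
    rw [h, inner_zero_right] at this
    linarith
  have h₁ : (1 - c) * (2 - c) ≤ 0 := mul_nonpos_of_nonpos_of_nonneg (by linarith) (by linarith)
  have h₂ : 0 < (3 - c) * ⟪x v₁, x v₁⟫_ℝ := mul_pos (by linarith) hpos
  exact (h₁.trans_lt h₂).ne

section Planar

variable [Fact (finrank ℝ E = 2)]

theorem lt_dist_of_dist_le (hx : IsDistRealization G c x) {m : ℕ} (hm : m < c) {p q r s : V}
    (hpq : 0 < G.dist p q ∧ G.dist p q ≤ m) (hpr : 0 < G.dist p r ∧ G.dist p r ≤ m)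
    (hps : 0 < G.dist p s ∧ G.dist p s ≤ m) (hqr : 0 < G.dist q r ∧ G.dist q r ≤ m)
    (hqs : 0 < G.dist q s ∧ G.dist q s ≤ m) (hrs : r ≠ s) : m < G.dist r s := by
  have hneg {i j : V} (h : 0 < G.dist i j ∧ G.dist i j ≤ m) : ⟪x i, x j⟫_ℝ < 0 := by
    have : (G.dist i j : ℝ) ≤ m := by exact_mod_cast h.2
    rw [hx.inner_eq (SimpleGraph.dist_ne_zero_iff_ne_and_reachable.1 h.1.ne').1]
    linarith
  have hnonneg := inner_nonneg_of_five_inner_neg (hneg hpq) (hneg hpr) (hneg hps) (hneg hqr)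
    (hneg hqs)
  rw [hx.inner_eq hrs] at hnonneg
  exact_mod_cast hm.trans_le (sub_nonneg.1 hnonneg)

theorem le_one_of_top (hx : IsDistRealization (⊤ : SimpleGraph V) c x)
    (hV : 4 ≤ Fintype.card V) : c ≤ 1 := by
  by_contra! hc
  obtain ⟨f⟩ := Function.Embedding.nonempty_of_card_le (α := Fin 4) (β := V) (by simpa using hV)
  have hdist {i j : Fin 4} (hij : i ≠ j) :
      0 < (⊤ : SimpleGraph V).dist (f i) (f j) ∧ (⊤ : SimpleGraph V).dist (f i) (f j) ≤ 1 := by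
    simp [SimpleGraph.dist_top_of_ne (f.injective.ne hij)]
  have hlt : 1 < (⊤ : SimpleGraph V).dist (f 2) (f 3) :=
    hx.lt_dist_of_dist_le (mod_cast hc) (p := f 0) (q := f 1) (hdist (by decide))
      (hdist (by decide)) (hdist (by decide)) (hdist (by decide)) (hdist (by decide))
      (f.injective.ne (by decide))
  exact hlt.not_ge (hdist (by decide)).2

theorem eq_zero_of_top (hx : IsDistRealization (⊤ : SimpleGraph V) c x)
    (hV : 4 ≤ Fintype.card V) : x = 0 := by
  funext i
  have hcard : (4 : ℝ) ≤ Fintype.card V := by exact_mod_cast hV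
  have hnorm : ‖x i‖ ^ 2 = (Fintype.card V - 1) * (c - 1) := by
    rw [hx.norm_sq_eq, transmission_top, Nat.cast_sub (by lia)]
    ring
  have hnonpos : ‖x i‖ ^ 2 ≤ 0 := by
    rw [hnorm]
    exact mul_nonpos_of_nonneg_of_nonpos (by linarith) (by linarith [hx.le_one_of_top hV])
  simpa using hnonpos

theorem eq_of_dist_eq (hx : IsDistRealization G c x) {a b w : V}
    (hab : LinearIndependent ℝ ![x a, x b]) (hza : G.dist z a ≠ 0) (hzb : G.dist z b ≠ 0)
    (ha : G.dist z a = G.dist w a) (hb : G.dist z b = G.dist w b) : x z = x w := by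
  have hinner {p : V} (hzp : G.dist z p ≠ 0) (hp : G.dist z p = G.dist w p) :
      ⟪x z, x p⟫_ℝ = ⟪x w, x p⟫_ℝ := by
    rw [hx.inner_eq (SimpleGraph.dist_ne_zero_iff_ne_and_reachable.1 hzp).1,
      hx.inner_eq (SimpleGraph.dist_ne_zero_iff_ne_and_reachable.1 (hp ▸ hzp)).1, hp]
  exact eq_of_inner_eq_of_linearIndependent hab (hinner hza ha) (hinner hzb hb)

theorem ne_end_of_dist_le_two (hx : IsDistRealization G c x) (hG : G.Connected)
    (hv : IsGeodesicQuad G v₀ v₁ v₂ v₃) (hc : 3 / 2 < c) (hc₂ : c ≤ 2) (hz : z ≠ v₀)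
    (hzv : G.dist z v₀ ≤ 2) : x z ≠ x v₀ := by
  intro heq
  have hpos := hG.pos_dist_of_ne hz
  obtain h | h : G.dist z v₀ = 1 ∨ G.dist z v₀ = 2 := by lia
  · exact hx.ne_of_dist_eq_one (by linarith) h heq
  · have h₀₂ : x v₂ = x v₀ := by
      refine eq_of_inner_eq_of_linearIndependent (hx.linearIndependent_end hv hc hc₂) ?_ ?_
      · rw [← real_inner_comm, hx.inner_eq_of_dist_eq hv.dist₀₂]
        nth_rw 1 [← heq]
        rw [hx.inner_eq_of_dist_eq h]
      · rw [← real_inner_comm, hx.inner_eq_of_dist_eq_one hv.dist₁₂,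
          hx.inner_eq_of_dist_eq_one hv.dist₀₁]
    have h₂₃ := hx.inner_eq_of_dist_eq_one hv.dist₂₃
    rw [h₀₂, hx.inner_eq_of_dist_eq hv.dist₀₃] at h₂₃
    linarith

theorem not_adj_second_of_le_two (hx : IsDistRealization G c x) (hG : G.Connected)
    (hv : IsGeodesicQuad G v₀ v₁ v₂ v₃) (hc : 3 / 2 < c) (hc₂ : c ≤ 2)
    (hz₀ : z ≠ v₀) (hz₂ : z ≠ v₂) (hz₃ : z ≠ v₃) : ¬ G.Adj z v₁ := by
  intro hadj
  have h₁ : G.dist z v₁ = 1 := SimpleGraph.dist_eq_one_iff_adj.2 hadj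
  have hpos₂ := hG.pos_dist_of_ne hz₂
  have hpos₃ := hG.pos_dist_of_ne hz₃
  have h₀ : G.dist z v₀ ≤ 2 := by
    linarith [hG.dist_triangle (u := z) (v := v₁) (w := v₀), hv.symm.dist₂₃]
  have h₂ : G.dist z v₂ ≤ 2 := by
    linarith [hG.dist_triangle (u := z) (v := v₁) (w := v₂), hv.dist₁₂]
  have h₃ : G.dist z v₃ ≤ G.dist z v₂ + 1 := hv.dist₂₃ ▸ hG.dist_triangle
  have h₀₃ : 3 ≤ G.dist z v₀ + G.dist z v₃ := by
    rw [← hv.dist₀₃, G.dist_comm (u := z)]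
    exact hG.dist_triangle
  obtain hd₂ | hd₂ : G.dist z v₂ = 2 ∨ G.dist z v₂ = 1 := by lia
  · refine hx.ne_end_of_dist_le_two hG hv hc hc₂ hz₀ h₀ ?_
    exact hx.eq_of_dist_eq (hx.linearIndependent_middle hv hc) (by simp [h₁]) hpos₂.ne'
      (h₁.trans hv.dist₀₁.symm) (hd₂.trans hv.dist₀₂.symm)
  obtain hd₃ | hd₃ : G.dist z v₃ = 1 ∨ G.dist z v₃ = 2 := by lia
  · refine hx.ne_of_dist_eq_one (by linarith) hd₂ ?_
    exact hx.eq_of_dist_eq (hx.linearIndependent_end hv hc hc₂) (by lia) (by simp [h₁])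
      ((by lia : G.dist z v₀ = 2).trans hv.symm.dist₁₃.symm) (h₁.trans hv.symm.dist₁₂.symm)
  · refine hx.ne_of_dist_eq_one (by linarith) h₁ ?_
    exact hx.eq_of_dist_eq (hx.linearIndependent_end hv.symm hc hc₂) hpos₃.ne' hpos₂.ne'
      (hd₃.trans hv.dist₁₃.symm) (hd₂.trans hv.dist₁₂.symm)

theorem not_adj_first_of_le_two (hx : IsDistRealization G c x) (hG : G.Connected)
    (hv : IsGeodesicQuad G v₀ v₁ v₂ v₃) (hc : 3 / 2 < c) (hc₂ : c ≤ 2)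
    (hz₁ : z ≠ v₁) (hz₂ : z ≠ v₂) (hz₃ : z ≠ v₃) : ¬ G.Adj z v₀ := by
  intro hadj
  have h₀ : G.dist z v₀ = 1 := SimpleGraph.dist_eq_one_iff_adj.2 hadj
  have hnonneg {i j : V} (hij : i ≠ j) (hd : 2 ≤ G.dist i j) : 0 ≤ ⟪x i, x j⟫_ℝ := by
    have : (2 : ℝ) ≤ G.dist i j := by exact_mod_cast hd
    rw [hx.inner_eq hij]
    linarith
  have h₂ : 2 ≤ G.dist z v₂ := hG.one_lt_dist_of_ne_of_not_adj hz₂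
    (hx.not_adj_second_of_le_two hG hv.symm hc hc₂ hz₃ hz₁ hadj.ne)
  have h₃ : 2 ≤ G.dist z v₃ := by
    linarith [hG.dist_triangle (u := v₀) (v := z) (w := v₃), G.dist_comm (u := z) (v := v₀),
      hv.dist₀₃]
  refine (hnonneg hz₂ h₂).not_gt (inner_neg_of_crossing (u := x v₀) (w := x v₃) ?_
    (hnonneg hz₃ h₃) ?_ ?_ ?_)
  · rw [real_inner_comm, hx.inner_eq_of_dist_eq_one h₀]
    linarith
  · rw [hx.inner_eq_of_dist_eq_one hv.dist₂₃]
    linarith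
  · rw [hx.inner_eq_of_dist_eq hv.dist₀₂]
    linarith
  · rw [hx.inner_eq_of_dist_eq hv.dist₀₃]
    linarith

theorem not_adj_second_of_two_lt (hx : IsDistRealization G c x) (hG : G.Connected)
    (hv : IsGeodesicQuad G v₀ v₁ v₂ v₃) (hc : 2 < c) (hz₀ : z ≠ v₀) (hz₂ : z ≠ v₂) :
    ¬ G.Adj z v₁ := by
  intro hadj
  have h₁ : G.dist v₁ z = 1 := SimpleGraph.dist_eq_one_iff_adj.2 hadj.symm
  have h₀ : G.dist v₀ z ≤ 2 := hG.dist_triangle.trans_eq (by rw [hv.dist₀₁, h₁])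
  have h₂ : G.dist v₂ z ≤ 2 := hG.dist_triangle.trans_eq (by rw [hv.symm.dist₁₂, h₁])
  refine h₂.not_gt (hx.lt_dist_of_dist_le (mod_cast hc) (p := v₁) (q := v₀) ?_ ?_ ?_ ?_ ?_ hz₂.symm)
  · simp [hv.symm.dist₂₃]
  · simp [hv.dist₁₂]
  · simp [h₁]
  · simp [hv.dist₀₂]
  · exact ⟨hG.pos_dist_of_ne hz₀.symm, h₀⟩

/-- Distances to `z` and to `v₃` are affine along the path, which forces
`x v₀ + x v₂ = 2 • x v₁`. -/
theorem not_isGeodesicQuad_extension (hx : IsDistRealization G c x)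
    (hv : IsGeodesicQuad G v₀ v₁ v₂ v₃) (hc : 2 < c) : ¬ IsGeodesicQuad G z v₀ v₁ v₂ := by
  intro hz
  have hli : LinearIndependent ℝ ![x z, x v₃] := by
    refine linearIndependent_pair_of_inner_mul_inner_ne (y := x v₁) (z := x v₀) ?_
    rw [hx.inner_eq_of_dist_eq hz.dist₀₂, hx.inner_eq_of_dist_eq hv.symm.dist₀₃,
      hx.inner_eq_of_dist_eq_one hz.dist₀₁, hx.inner_eq_of_dist_eq hv.symm.dist₀₂]
    intro h
    linarith
  have hmid : x v₀ + x v₂ = (2 : ℝ) • x v₁ := by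
    refine eq_of_inner_eq_of_linearIndependent hli ?_ ?_
    · rw [inner_add_left, real_inner_smul_left, hx.inner_eq_of_dist_eq_one hz.symm.dist₂₃,
        hx.inner_eq_of_dist_eq hz.symm.dist₀₃, hx.inner_eq_of_dist_eq hz.symm.dist₁₃]
      ring
    · rw [inner_add_left, real_inner_smul_left, hx.inner_eq_of_dist_eq hv.dist₀₃,
        hx.inner_eq_of_dist_eq_one hv.dist₂₃, hx.inner_eq_of_dist_eq hv.dist₁₃]
      ring
  have hinner := congrArg (⟪·, x v₁⟫_ℝ) hmid
  simp only [inner_add_left, real_inner_smul_left, hx.inner_eq_of_dist_eq_one hv.dist₀₁,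
    hx.inner_eq_of_dist_eq_one hv.symm.dist₁₂] at hinner
  linarith [real_inner_self_nonneg (x := x v₁)]

theorem not_adj_first_of_two_lt (hx : IsDistRealization G c x) (hG : G.Connected)
    (hv : IsGeodesicQuad G v₀ v₁ v₂ v₃) (hc : 2 < c) (hz₁ : z ≠ v₁) (hz₂ : z ≠ v₂) :
    ¬ G.Adj z v₀ := by
  intro hadj
  have h₀ : G.dist v₀ z = 1 := SimpleGraph.dist_eq_one_iff_adj.2 hadj.symm
  have h₁ : G.dist v₁ z ≤ 2 := hG.dist_triangle.trans_eq (by rw [hv.symm.dist₂₃, h₀])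
  have h₂ : G.dist v₂ z ≤ 3 := hG.dist_triangle.trans_eq (by rw [hv.symm.dist₁₃, h₀])
  have h₂' : 2 < G.dist v₂ z := by
    refine hx.lt_dist_of_dist_le (mod_cast hc) (p := v₀) (q := v₁) ?_ ?_ ?_ ?_ ?_ hz₂.symm
    · simp [hv.dist₀₁]
    · simp [hv.dist₀₂]
    · simp [h₀]
    · simp [hv.dist₁₂]
    · exact ⟨hG.pos_dist_of_ne hz₁.symm, h₁⟩
  have h₁₂ : G.dist v₂ z ≤ 1 + G.dist v₁ z := hv.symm.dist₁₂ ▸ hG.dist_triangle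
  have hz : IsGeodesicQuad G v₂ v₁ v₀ z :=
    ⟨hv.symm.dist₁₂, hv.symm.dist₂₃, h₀, hv.symm.dist₁₃, by lia, by lia⟩
  exact hx.not_isGeodesicQuad_extension hv hc hz.symm

theorem not_adj_first (hx : IsDistRealization G c x) (hG : G.Connected)
    (hv : IsGeodesicQuad G v₀ v₁ v₂ v₃) (hc : 3 / 2 < c) (hz₁ : z ≠ v₁) (hz₂ : z ≠ v₂)
    (hz₃ : z ≠ v₃) : ¬ G.Adj z v₀ :=
  (le_or_gt c 2).elim (hx.not_adj_first_of_le_two hG hv hc · hz₁ hz₂ hz₃)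
    (hx.not_adj_first_of_two_lt hG hv · hz₁ hz₂)

theorem not_adj_second (hx : IsDistRealization G c x) (hG : G.Connected)
    (hv : IsGeodesicQuad G v₀ v₁ v₂ v₃) (hc : 3 / 2 < c) (hz₀ : z ≠ v₀) (hz₂ : z ≠ v₂)
    (hz₃ : z ≠ v₃) : ¬ G.Adj z v₁ :=
  (le_or_gt c 2).elim (hx.not_adj_second_of_le_two hG hv hc · hz₀ hz₂ hz₃)
    (hx.not_adj_second_of_two_lt hG hv · hz₀ hz₂)

theorem dist_le_two (hx : IsDistRealization G c x) (hG : G.Connected) (hV : 5 ≤ Fintype.card V)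
    (u w : V) : G.dist u w ≤ 2 := by
  classical
  by_contra! h
  obtain ⟨v₁, v₂, v₃, hv⟩ := exists_isGeodesicQuad hG h
  have hc : 3 / 2 < c := by
    have := hx.dist_lt_two_mul hG (u := u) (w := v₃) (by rintro rfl; simpa using hv.dist₀₃)
    rw [hv.dist₀₃, Nat.cast_ofNat] at this
    linarith
  have hne : (({u, v₁, v₂, v₃} : Finset V) : Set V) ≠ Set.univ := by
    rw [Ne, Finset.coe_eq_univ]
    intro huniv
    have := Finset.card_le_four (a := u) (b := v₁) (c := v₂) (d := v₃)
    rw [huniv, Finset.card_univ] at this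
    lia
  obtain ⟨a, ha, z, hz, hadj⟩ := exists_adj_mem_notMem hG ⟨u, by simp⟩ hne
  obtain ⟨hz₀, hz₁, hz₂, hz₃⟩ : z ≠ u ∧ z ≠ v₁ ∧ z ≠ v₂ ∧ z ≠ v₃ := by simpa using hz
  have ha' : a = u ∨ a = v₁ ∨ a = v₂ ∨ a = v₃ := by simpa using ha
  rcases ha' with rfl | rfl | rfl | rfl
  · exact hx.not_adj_first hG hv hc hz₁ hz₂ hz₃ hadj.symm
  · exact hx.not_adj_second hG hv hc hz₀ hz₂ hz₃ hadj.symm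
  · exact hx.not_adj_second hG hv.symm hc hz₃ hz₁ hz₀ hadj.symm
  · exact hx.not_adj_first hG hv.symm hc hz₂ hz₁ hz₀ hadj.symm

theorem diam_eq_two (hx : IsDistRealization G c x) (hG : G.Connected) (hV : 5 ≤ Fintype.card V)
    (hx₀ : x ≠ 0) : G.diam = 2 := by
  classical
  have : Nontrivial V := Fintype.one_lt_card_iff_nontrivial.1 (by lia)
  have hle : G.diam ≤ 2 := by
    obtain ⟨u, w, huw⟩ := G.exists_dist_eq_diam
    exact huw ▸ hx.dist_le_two hG hV u w
  have hne₀ : G.diam ≠ 0 :=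
    SimpleGraph.diam_ne_zero_of_ediam_ne_top (SimpleGraph.connected_iff_ediam_ne_top.1 hG)
  have hne₁ : G.diam ≠ 1 := by
    rw [Ne, SimpleGraph.diam_eq_one]
    rintro rfl
    exact hx₀ (hx.eq_zero_of_top (by lia))
  lia

end Planar

end IsDistRealization
end Realization

section DistLaplacian

variable {V : Type*} [Fintype V] [DecidableEq V] {G : SimpleGraph V}

theorem distLaplacian_eq_diagonal_sub (G : SimpleGraph V) :
    distLaplacian G =
      diagonal (fun i => (transmission G i : ℝ)) - of fun i j => (G.dist i j : ℝ) := by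
  ext i j
  obtain rfl | h := eq_or_ne i j <;> simp [distLaplacian, transmission, *]

theorem isHermitian_distLaplacian (G : SimpleGraph V) : (distLaplacian G).IsHermitian := by
  rw [distLaplacian_eq_diagonal_sub]
  refine (isHermitian_diagonal _).sub (IsHermitian.ext fun i j => ?_)
  simp [G.dist_comm]

theorem distLaplacian_mulVec_one (G : SimpleGraph V) : distLaplacian G *ᵥ 1 = 0 := by
  ext i
  rw [distLaplacian_eq_diagonal_sub, sub_mulVec, Pi.sub_apply, mulVec_diagonal]
  simp [mulVec, dotProduct, transmission]

theorem deflatedShift_distLaplacian_apply (μ : ℝ) (i j : V) :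
    deflatedShift (distLaplacian G) μ i j =
      (if i = j then μ - transmission G i else 0) + (G.dist i j - μ / Fintype.card V) := by
  rw [deflatedShift, Matrix.sub_apply, Matrix.smul_apply, centeringMatrix_apply,
    distLaplacian_eq_diagonal_sub, Matrix.sub_apply, diagonal_apply, one_apply, of_apply,
    smul_eq_mul]
  split_ifs <;> ring

theorem isDistRealization_of_gram_eq {E : Type*} [NormedAddCommGroup E] [InnerProductSpace ℝ E]
    {x : V → E} {μ : ℝ} (h : gram ℝ x = deflatedShift (distLaplacian G) μ) :
    IsDistRealization G (μ / Fintype.card V) x where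
  inner_eq {i j} hij := by
    rw [← gram_apply, h, deflatedShift_distLaplacian_apply, if_neg hij, zero_add]
  norm_sq_eq i := by
    have : (Fintype.card V : ℝ) ≠ 0 := Nat.cast_ne_zero.2 (Fintype.card_pos_iff.2 ⟨i⟩).ne'
    rw [← real_inner_self_eq_norm_sq, ← gram_apply, h, deflatedShift_distLaplacian_apply,
      if_pos rfl, SimpleGraph.dist_self, Nat.cast_zero]
    field_simp
    ring

theorem lambdaMax_distLaplacian_ne_zero [Nontrivial V] (hG : G.Connected) :
    lambdaMax (distLaplacian G) ≠ 0 := by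
  intro h₀
  obtain ⟨u, w, huw⟩ := exists_pair_ne V
  obtain ⟨x, hx⟩ := exists_gram_eq_of_posSemidef (posSemidef_deflatedShift_lambdaMax
    (isHermitian_distLaplacian G) (distLaplacian_mulVec_one G))
  have hlt := (isDistRealization_of_gram_eq hx).dist_lt_two_mul hG huw
  rw [h₀, zero_div, mul_zero] at hlt
  exact hlt.not_ge (Nat.cast_nonneg _)

end DistLaplacian

theorem diam_eq_two_of_multiplicity_eq_sub_three_general {V : Type*} [Fintype V] [DecidableEq V]
    (hV : 5 ≤ Fintype.card V) (G : SimpleGraph V) (hG : G.Connected)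
    (hmult : eigMult (distLaplacian G) (lambdaMax (distLaplacian G)) = Fintype.card V - 3) :
    G.diam = 2 := by
  have : Nontrivial V := Fintype.one_lt_card_iff_nontrivial.1 (by lia)
  have hM := isHermitian_distLaplacian G
  have hM1 := distLaplacian_mulVec_one G
  have hrank : (deflatedShift (distLaplacian G) (lambdaMax (distLaplacian G))).rank = 2 := by
    have := rank_deflatedShift_add hM hM1 (lambdaMax_distLaplacian_ne_zero hG)
    lia
  obtain ⟨x, hx⟩ := exists_gram_eq_of_posSemidef (posSemidef_deflatedShift_lambdaMax hM hM1)
  have : Fact (finrank ℝ (EuclideanSpace ℝ (Fin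
      (deflatedShift (distLaplacian G) (lambdaMax (distLaplacian G))).rank)) = 2) :=
    ⟨by rw [finrank_euclideanSpace_fin, hrank]⟩
  refine (isDistRealization_of_gram_eq hx).diam_eq_two hG hV ?_
  rintro rfl
  rw [← hx, gram_zero, rank_zero] at hrank
  exact absurd hrank (by decide)

/-- If `G` is a connected graph on `n ≥ 6` vertices whose largest distance
Laplacian eigenvalue has multiplicity `n - 3`, then the diameter of `G` equals `2`. -/
theorem diam_eq_two_of_multiplicity_eq_sub_three
    (n : ℕ) (hn : 6 ≤ n) (G : SimpleGraph (Fin n)) (hG : G.Connected)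
    (hmult : eigMult (distLaplacian G) (lambdaMax (distLaplacian G)) = n - 3) :
    G.diam = 2 := by
  exact diam_eq_two_of_multiplicity_eq_sub_three_general (by rw [Fintype.card_fin]; lia) G hG
    (by rwa [Fintype.card_fin])
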